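/- Let x = (x_1,…,x_m) ∈ ℂ^m and y = (y_1,…,y_n) ∈ ℂ^n be in generic position (all brackets appearing in denominators below are nonzero), and let α ∈ ℕ^m, β ∈ ℕ^n be multi-indices with α_1 + ⋯ + α_m = β_1 + ⋯ + β_n. Then for each d = 0, 1, 2, …: Σ_{μ ∈ ℕ^m, |μ| = d} (Δ(x + μδ)/Δ(x)) · ∏_{1≤i,j≤m} [x_i − x_j − α_j δ]_{μ_i}/[x_i − x_j + δ]_{μ_i} · ∏_{1≤i≤m, 1≤k≤n} [x_i + y_k + β_k δ]_{μ_i}/[x_i + y_k]_{μ_i} = Σ_{ν ∈ ℕ^n, |ν| = d} (Δ(y + νδ)/Δ(y)) · ∏_{1≤k,l≤n} [y_k − y_l − β_l δ]_{ν_k}/[y_k − y_l + δ]_{ν_k} · ∏_{1≤k≤n, 1≤i≤m} [y_k + x_i + α_i δ]_{ν_k}/[y_k + x_i]_{ν_k}. -/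

import Mathlib

/-!
The identity is a specialisation of a duality for subsets, which itself comes from the determinant
formula of Frobenius (`frobenius_det`): with `g z = [c + z] / ([c] [z])`,
`det (g (X i + Y j)) = [c + ∑ X + ∑ Y] / [c] · Δ(X) Δ(Y) / ∏ [X i + Y j]`,
proved by column elimination, the Riemann relation showing that the Schur complement of a corner
entry is again a matrix of the same kind with `c` replaced by `c + X 0 + Y 0`.

The coefficient of `u ^ d` in `det (u g (X i + Y j) + g (X i + Y j + δ))` can be expanded by rows,
shifting the `X i` with `i ∉ K`, or by columns, shifting the `Y j` with `j ∉ K`, where `K` runs over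
the `d`-element sets. Since the factor `[c + ∑ X + ∑ Y + (N - d) δ]` is the same in all terms,
dividing by it gives the duality for `α = (1, …, 1)`, `β = (1, …, 1)` (`subset_duality`).

For general `α`, `β` the `N = |α| = |β|` variables are specialised to the blocks
`x i, x i + δ, …, x i + (α i - 1) δ`, and likewise for `y`. A set `K` then contributes only if it
consists of initial segments of the blocks, so `K` is encoded by a multi-index `μ ≤ α`, and the
products telescope to the summand of the theorem up to the common sign `(-1) ^ d` (`dualSum_eq`).

This requires more brackets to be nonzero than the theorem assumes. By Baire's theorem, the points
`t` of a suitable complex line through `(x, y)` at which all of them are nonzero are dense, and both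
sides are continuous at `(x, y)`, so the identity extends.
-/

open Finset

/-- Shifted factorial `[x]_k = [x][x+δ]⋯[x+(k-1)δ]` with respect to the bracket `f`. -/
noncomputable def sf (f : ℂ → ℂ) (δ : ℂ) (x : ℂ) (k : ℕ) : ℂ :=
  ∏ i ∈ Finset.range k, f (x + (i : ℂ) * δ)

/-- Difference product `Δ(x) = ∏_{i<j} [x_i - x_j]`. -/
noncomputable def Del (f : ℂ → ℂ) {m : ℕ} (x : Fin m → ℂ) : ℂ :=
  ∏ i : Fin m, ∏ j ∈ Finset.univ.filter (fun j => i < j), f (x i - x j)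

/-- The multiple hypergeometric series `Φ^{m,n}_N(a; x | b; c)`. -/
noncomputable def Phi (f : ℂ → ℂ) (δ : ℂ) {m n : ℕ} (a x : Fin m → ℂ)
    (b c : Fin n → ℂ) (N : ℕ) : ℂ :=
  ∑ μ ∈ Finset.Nat.antidiagonalTuple m N,
    (Del f (fun i => x i + (μ i : ℂ) * δ) / Del f x)
      * (∏ i, ∏ j, sf f δ (x i - x j + a j) (μ i) / sf f δ (x i - x j + δ) (μ i))
      * (∏ i, ∏ k, sf f δ (x i + b k) (μ i) / sf f δ (x i + c k) (μ i))

/-- The `μ`-th summand of the very well-poised series `E^{m,n}(a; x | s; u; v)`. -/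
noncomputable def Eterm (f : ℂ → ℂ) (δ : ℂ) {m n : ℕ} (a x : Fin m → ℂ) (s : ℂ)
    (u v : Fin n → ℂ) (μ : Fin m → ℕ) : ℂ :=
  (Del f (fun i => x i + (μ i : ℂ) * δ) / Del f x)
    * (∏ i, f (x i + s + (((∑ j, μ j) + μ i : ℕ) : ℂ) * δ) / f (x i + s))
    * (∏ j, (sf f δ (s + x j) (∑ i, μ i) / sf f δ (δ + s + x j - a j) (∑ i, μ i))
        * ∏ i, sf f δ (x i - x j + a j) (μ i) / sf f δ (x i - x j + δ) (μ i))
    * (∏ k, (sf f δ (v k) (∑ i, μ i) / sf f δ (δ + s - u k) (∑ i, μ i))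
        * ∏ i, sf f δ (x i + u k) (μ i) / sf f δ (x i + δ + s - v k) (μ i))

/-- The very well-poised multiple series `E^{m,n}(a; x | s; u; v)`. -/
noncomputable def Evw (f : ℂ → ℂ) (δ : ℂ) {m n : ℕ} (a x : Fin m → ℂ) (s : ℂ)
    (u v : Fin n → ℂ) : ℂ :=
  ∑' μ : Fin m → ℕ, Eterm f δ a x s u v μ

/-- The one-dimensional very well-poised series `_{r+3}E_{r+2}(s; u_1, …, u_r)`. -/
noncomputable def E1 (f : ℂ → ℂ) (δ : ℂ) {r : ℕ} (s : ℂ) (u : Fin r → ℂ) : ℂ :=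
  ∑' k : ℕ, (f (s + 2 * (k : ℂ) * δ) / f s) * (sf f δ s k / sf f δ δ k)
    * ∏ i, sf f δ (u i) k / sf f δ (δ + s - u i) k

/-! ### The determinant formula of Frobenius -/

lemma Del_succ (f : ℂ → ℂ) {N : ℕ} (x : Fin (N + 1) → ℂ) :
    Del f x = (∏ j : Fin N, f (x 0 - x j.succ)) * Del f (fun i => x i.succ) := by
  simp only [Del, Finset.prod_filter, Fin.prod_univ_succ]
  simp

/-- The Riemann relation in the form needed for the Schur complement of a `2 × 2` minor. -/
lemma riemann_four (f : ℂ → ℂ)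
    (hRiem : ∀ x y u v : ℂ,
      f (x + y) * f (x - y) * f (u + v) * f (u - v) =
        f (x + u) * f (x - u) * f (y + v) * f (y - v)
          - f (x + v) * f (x - v) * f (y + u) * f (y - u)) (c p q r s : ℂ) :
    f (c + p + r) * f (c + q + s) * f (p + s) * f (q + r)
      - f (c + p + s) * f (c + q + r) * f (q + s) * f (p + r)
      = f c * f (p - q) * f (r - s) * f (c + q + s + p + r) := by
  have h := hRiem (c + (p + q + r + s) / 2) ((p + q + r + s) / 2)
    ((p - q + r - s) / 2) ((p - q - r + s) / 2)
  rw [show c + (p + q + r + s) / 2 + (p + q + r + s) / 2 = c + q + s + p + r by ring,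
    show c + (p + q + r + s) / 2 - (p + q + r + s) / 2 = c by ring,
    show (p - q + r - s) / 2 + (p - q - r + s) / 2 = p - q by ring,
    show (p - q + r - s) / 2 - (p - q - r + s) / 2 = r - s by ring,
    show c + (p + q + r + s) / 2 + (p - q + r - s) / 2 = c + p + r by ring,
    show c + (p + q + r + s) / 2 - (p - q + r - s) / 2 = c + q + s by ring,
    show (p + q + r + s) / 2 + (p - q - r + s) / 2 = p + s by ring,
    show (p + q + r + s) / 2 - (p - q - r + s) / 2 = q + r by ring,
    show c + (p + q + r + s) / 2 + (p - q - r + s) / 2 = c + p + s by ring,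
    show c + (p + q + r + s) / 2 - (p - q - r + s) / 2 = c + q + r by ring,
    show (p + q + r + s) / 2 + (p - q + r - s) / 2 = p + r by ring,
    show (p + q + r + s) / 2 - (p - q + r - s) / 2 = q + s by ring] at h
  linear_combination -h

/-- Elimination of the first column: the determinant equals the corner entry times the determinant
of its Schur complement. -/
lemma det_schur {N : ℕ} (M : Matrix (Fin (N + 1)) (Fin (N + 1)) ℂ) (h0 : M 0 0 ≠ 0) :
    M.det = M 0 0 * (Matrix.of fun i j : Fin N =>
      M i.succ j.succ - M i.succ 0 / M 0 0 * M 0 j.succ).det := by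
  set c : Fin (N + 1) → ℂ := Fin.cons 0 (fun i => M i.succ 0 / M 0 0) with hc
  have hdet : M.det = (Matrix.of fun i j => M i j - c i * M 0 j).det := by
    refine Matrix.det_eq_of_forall_row_eq_smul_add_const c 0 (by simp [hc]) ?_
    intro i j
    simp [hc]
  rw [hdet, Matrix.det_succ_column_zero, Fin.sum_univ_succ, Finset.sum_eq_zero]
  · simp [hc]
    left
    congr 1
  · intro i _
    simp [hc, h0]

/-- The determinant formula of Frobenius, an elliptic Cauchy determinant. The parameter `c` is required
to be generic so that each corner entry met during the elimination is nonzero. -/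
lemma frobenius_det (f : ℂ → ℂ) (hodd : ∀ t : ℂ, f (-t) = -f t)
    (hRiem : ∀ x y u v : ℂ,
      f (x + y) * f (x - y) * f (u + v) * f (u - v) =
        f (x + u) * f (x - u) * f (y + v) * f (y - v)
          - f (x + v) * f (x - v) * f (y + u) * f (y - u))
    (N : ℕ) : ∀ (c : ℂ) (x y : Fin N → ℂ) (_ : ∀ i j, f (x i + y j) ≠ 0)
      (_ : ∀ S : Finset (Fin N), f (c + ∑ i ∈ S, (x i + y i)) ≠ 0),
      (Matrix.of fun i j => f (c + x i + y j) / (f c * f (x i + y j))).det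
        = f (c + ∑ i, (x i + y i)) / f c * (Del f x * Del f y / ∏ i, ∏ j, f (x i + y j)) := by
  induction N with
  | zero =>
    intro c x y _ hS
    have := hS ∅
    simp at this
    simp [Del, this]
  | succ N ih =>
    intro c x y hxy hS
    have hc : f c ≠ 0 := by simpa using hS ∅
    have hc0 : f (c + x 0 + y 0) ≠ 0 := by
      have := hS {0}
      simpa [add_assoc] using this
    rw [det_schur _ (by simp [hc, hc0, hxy])]
    set c' := c + x 0 + y 0 with hc'
    have hent : (Matrix.of fun i j : Fin N =>
        (Matrix.of fun i j => f (c + x i + y j) / (f c * f (x i + y j))) i.succ j.succ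
        - (Matrix.of fun i j => f (c + x i + y j) / (f c * f (x i + y j))) i.succ 0
          / (Matrix.of fun i j => f (c + x i + y j) / (f c * f (x i + y j))) 0 0
          * (Matrix.of fun i j => f (c + x i + y j) / (f c * f (x i + y j))) 0 j.succ)
        = Matrix.of fun i j : Fin N => (f (x 0 - x i.succ) / f (x i.succ + y 0)) *
          (Matrix.of fun i j : Fin N => (f (y 0 - y j.succ) / f (x 0 + y j.succ)) *
            (Matrix.of fun i j : Fin N =>
              f (c' + x i.succ + y j.succ) / (f c' * f (x i.succ + y j.succ))) i j) i j := by
      ext i j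
      simp only [Matrix.of_apply]
      have h := riemann_four f hRiem c (x i.succ) (x 0) (y j.succ) (y 0)
      rw [← neg_sub (x 0), ← neg_sub (y 0), hodd, hodd] at h
      have h1 := hxy i.succ j.succ
      have h2 := hxy i.succ 0
      have h3 := hxy 0 j.succ
      have h4 := hxy 0 0
      rw [← hc'] at *
      field_simp
      linear_combination h
    rw [hent, Matrix.det_mul_column, Matrix.det_mul_row,
      ih c' (fun i => x i.succ) (fun i => y i.succ) (fun i j => hxy _ _) ?_]
    · rw [Del_succ, Del_succ f y]
      simp only [Matrix.of_apply, Fin.prod_univ_succ, Fin.sum_univ_succ, Finset.prod_mul_distrib,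
        Finset.prod_div_distrib]
      rw [show c + (x 0 + y 0 + ∑ i : Fin N, (x i.succ + y i.succ))
        = c' + ∑ i : Fin N, (x i.succ + y i.succ) by rw [hc']; ring, ← hc']
      field_simp
    · intro S
      have := hS (insert 0 (S.map (Fin.succEmb N)))
      rw [Finset.sum_insert (by simp [Fin.succ_ne_zero])] at this
      simpa [hc', add_assoc] using this

/-! ### Products over pairs and generic points -/

lemma prod_prod_eq_diag_mul {N : ℕ} (F : Fin N → Fin N → ℂ) :
    ∏ i, ∏ j, F i j =
      (∏ i, F i i) * ∏ i, ∏ j ∈ Finset.univ.filter (fun j => i < j), (F i j * F j i) := by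
  have h := Finset.prod_prod_Ioi_mul_eq_prod_prod_off_diag (fun i j => F j i)
  have h1 : ∀ i : Fin N, Finset.univ.filter (fun j => i < j) = Finset.Ioi i := by
    intro i; ext; simp
  simp only [h1, h, ← Finset.prod_mul_distrib]
  refine Finset.prod_congr rfl fun i _ => ?_
  rw [← Finset.prod_compl_mul_prod {i}, mul_comm]
  simp

/-- Countably many nonconstant affine arguments can be kept off the zeros of `f` simultaneously on
a dense set. -/
lemma dense_ne_zero (f : ℂ → ℂ) (hf : f ≠ 0) (hdiff : Differentiable ℂ f) {ι : Type*} [Countable ι]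
    (a c : ι → ℂ) (ha : ∀ i, a i ≠ 0) : Dense {t : ℂ | ∀ i, f (c i + a i * t) ≠ 0} := by
  have : {t : ℂ | ∀ i, f (c i + a i * t) ≠ 0} = ⋂ i, {t : ℂ | f (c i + a i * t) ≠ 0} := by
    ext; simp
  rw [this]
  have hd : ∀ i, Differentiable ℂ fun t => f (c i + a i * t) := fun i => by fun_prop
  refine dense_iInter_of_isOpen (fun i => ?_) (fun i => ?_)
  · exact isOpen_ne_fun (hd i).continuous continuous_const
  · rw [← Set.compl_ofPred, ← interior_eq_empty_iff_dense_compl] 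
    by_contra hne
    obtain ⟨z, hz⟩ := Set.nonempty_iff_ne_empty.mpr hne
    have han : AnalyticOnNhd ℂ (fun t => f (c i + a i * t)) Set.univ :=
      fun z _ => (hd i).analyticAt z
    have hE : (fun t => f (c i + a i * t)) =ᶠ[nhds z] 0 := mem_interior_iff_mem_nhds.mp hz
    have := han.eqOn_zero_of_preconnected_of_eventuallyEq_zero isPreconnected_univ
      (Set.mem_univ z) hE
    apply hf
    ext w
    have h2 := this (Set.mem_univ ((w - c i) / a i))
    simpa [mul_div_cancel₀ _ (ha i)] using h2

/-! ### The duality for subsets -/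

lemma det_smul_add {N : ℕ} (A B : Matrix (Fin N) (Fin N) ℂ) (u : ℂ) :
    (u • A + B).det =
      ∑ K : Finset (Fin N), (Matrix.of (K.piecewise (fun i => A i) (fun i => B i))).det * u ^ #K := by
  have h := (Matrix.detRowAlternating (n := Fin N) (R := ℂ)).toMultilinearMap.map_add_univ
    (fun i => u • A i) (fun i => B i)
  refine Eq.trans h (Finset.sum_congr rfl fun K _ => ?_)
  have h2 := Matrix.det_mul_column (fun i => if i ∈ K then u else 1)
    (Matrix.of (K.piecewise (fun i => A i) (fun i => B i)))
  have h3 : ∏ i, (if i ∈ K then u else 1) = u ^ #K := by simp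
  rw [h3, mul_comm] at h2
  rw [← h2]
  refine congrArg Matrix.det ?_
  ext i j
  by_cases hi : i ∈ K <;> simp [hi]

/-- Replacing `d` rows, or `d` columns, of `B` by those of `A` in all possible ways gives the same
sum of determinants: both are the coefficient of `u ^ d` in `det (u A + B)`. -/
lemma sum_det_rows_eq_columns {N : ℕ} (A B : Matrix (Fin N) (Fin N) ℂ) (d : ℕ) :
    ∑ K ∈ Finset.univ.powersetCard d,
        (Matrix.of (K.piecewise (fun i => A i) (fun i => B i))).det =
      ∑ K ∈ Finset.univ.powersetCard d,
        (Matrix.of (K.piecewise (fun i => A.transpose i) (fun i => B.transpose i))).det := by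
  have key : ∀ A B : Matrix (Fin N) (Fin N) ℂ, ∑ K ∈ Finset.univ.powersetCard d,
        (Matrix.of (K.piecewise (fun i => A i) (fun i => B i))).det =
      (∑ K : Finset (Fin N), Polynomial.C
        (Matrix.of (K.piecewise (fun i => A i) (fun i => B i))).det * Polynomial.X ^ #K).coeff d := by
    intro A B
    rw [Polynomial.finsetSum_coeff]
    simp only [Polynomial.coeff_C_mul, Polynomial.coeff_X_pow, mul_ite, mul_one, mul_zero]
    rw [← Finset.sum_filter]
    refine Finset.sum_congr ?_ fun _ _ => rfl
    ext K
    simp [Finset.mem_powersetCard, eq_comm]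
  rw [key, key]
  congr 1
  refine Polynomial.funext fun u => ?_
  simp only [Polynomial.eval_finsetSum, Polynomial.eval_mul, Polynomial.eval_C,
    Polynomial.eval_pow, Polynomial.eval_X]
  rw [← det_smul_add, ← det_smul_add, ← Matrix.det_transpose]
  simp

/-- The summand, indexed by a set `K` of variables, of the multiplicity-free case
`α = (1, …, 1)`, `β = (1, …, 1)` of the duality. -/
noncomputable def subsetTerm (f : ℂ → ℂ) (δ : ℂ) {N : ℕ} (X Y : Fin N → ℂ) (K : Finset (Fin N)) :
    ℂ :=
  (∏ i, ∏ j, if i ∈ K ∧ j ∉ K then f (X i - X j - δ) / f (X i - X j) else 1)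
    * ∏ i, ∏ j, if i ∈ K then f (X i + Y j + δ) / f (X i + Y j) else 1

/-- Adding `δ` to the variables outside `K`. -/
noncomputable def shiftOff (δ : ℂ) {N : ℕ} (X : Fin N → ℂ) (K : Finset (Fin N)) (i : Fin N) : ℂ :=
  if i ∈ K then X i else X i + δ

lemma Del_ne_zero (f : ℂ → ℂ) {N : ℕ} (X : Fin N → ℂ) (hX : ∀ i j, i ≠ j → f (X i - X j) ≠ 0) :
    Del f X ≠ 0 := by
  refine Finset.prod_ne_zero_iff.mpr fun i _ => Finset.prod_ne_zero_iff.mpr fun j hj => ?_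
  exact hX i j (ne_of_lt (by simpa using hj))

lemma Del_shiftOff (f : ℂ → ℂ) (hodd : ∀ t : ℂ, f (-t) = -f t) (δ : ℂ) {N : ℕ} (X : Fin N → ℂ)
    (hX : ∀ i j, i ≠ j → f (X i - X j) ≠ 0) (K : Finset (Fin N)) :
    Del f (shiftOff δ X K) / Del f X =
      ∏ i, ∏ j, if i ∈ K ∧ j ∉ K then f (X i - X j - δ) / f (X i - X j) else 1 := by
  rw [prod_prod_eq_diag_mul]
  simp only [Del, ← Finset.prod_div_distrib]
  rw [Finset.prod_eq_one (f := fun i => if i ∈ K ∧ i ∉ K then _ else _) (by intro i _; simp),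
    one_mul]
  refine Finset.prod_congr rfl fun i _ => Finset.prod_congr rfl fun j hj => ?_
  have hij : i ≠ j := ne_of_lt (by simpa using hj)
  have h1 := hX i j hij
  by_cases hi : i ∈ K <;> by_cases hj : j ∈ K <;> simp only [shiftOff, hi, hj, if_true, if_false,
    not_true, not_false_iff, and_true, and_false, mul_one, one_mul]
  · exact div_self h1
  · congr 2; ring
  · rw [show X j - X i - δ = -(X i + δ - X j) by ring, ← neg_sub (X i), hodd, hodd, neg_div_neg_eq]
  · rw [add_sub_add_right_eq_sub]; exact div_self h1

lemma prod_shiftOff (f : ℂ → ℂ) (δ : ℂ) {N : ℕ} (X Y : Fin N → ℂ)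
    (hXY' : ∀ i j, f (X i + Y j + δ) ≠ 0) (K : Finset (Fin N)) :
    (∏ i, ∏ j, f (X i + Y j + δ)) / ∏ i, ∏ j, f (shiftOff δ X K i + Y j) =
      ∏ i, ∏ j, if i ∈ K then f (X i + Y j + δ) / f (X i + Y j) else 1 := by
  simp only [← Finset.prod_div_distrib]
  refine Finset.prod_congr rfl fun i _ => Finset.prod_congr rfl fun j hj => ?_
  by_cases hi : i ∈ K
  · simp [shiftOff, hi]
  · simp only [shiftOff, hi, if_false]
    rw [add_right_comm (X i) δ]
    exact div_self (hXY' i j)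

/-- The Frobenius determinant with the variables outside `K` shifted, normalised by the products
that do not depend on `K`. -/
lemma det_shiftOff (f : ℂ → ℂ) (hodd : ∀ t : ℂ, f (-t) = -f t)
    (hRiem : ∀ x y u v : ℂ,
      f (x + y) * f (x - y) * f (u + v) * f (u - v) =
        f (x + u) * f (x - u) * f (y + v) * f (y - v)
          - f (x + v) * f (x - v) * f (y + u) * f (y - u))
    (δ : ℂ) {N : ℕ} (X Y : Fin N → ℂ)
    (hX : ∀ i j, i ≠ j → f (X i - X j) ≠ 0)
    (hXY : ∀ i j, f (X i + Y j) ≠ 0) (hXY' : ∀ i j, f (X i + Y j + δ) ≠ 0) (c : ℂ)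
    (K : Finset (Fin N))
    (hc : ∀ S : Finset (Fin N), f (c + ∑ i ∈ S, (shiftOff δ X K i + Y i)) ≠ 0) :
    (Matrix.of fun i j => f (c + shiftOff δ X K i + Y j) / (f c * f (shiftOff δ X K i + Y j))).det
      = f (c + (∑ i, X i + ∑ i, Y i + (N - #K : ℂ) * δ)) / f c
        * (Del f X * Del f Y / ∏ i, ∏ j, f (X i + Y j + δ)) * subsetTerm f δ X Y K := by
  have hD := Del_ne_zero f X hX
  have hP : ∏ i, ∏ j, f (X i + Y j + δ) ≠ 0 :=
    Finset.prod_ne_zero_iff.mpr fun i _ => Finset.prod_ne_zero_iff.mpr fun j _ => hXY' i j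
  have hP' : ∀ i j, f (shiftOff δ X K i + Y j) ≠ 0 := by
    intro i j
    by_cases hi : i ∈ K
    · simpa [shiftOff, hi] using hXY i j
    · simpa [shiftOff, hi, add_right_comm] using hXY' i j
  have hP2 : ∏ i, ∏ j, f (shiftOff δ X K i + Y j) ≠ 0 :=
    Finset.prod_ne_zero_iff.mpr fun i _ => Finset.prod_ne_zero_iff.mpr fun j _ => hP' i j
  have hsum : ∑ i, (shiftOff δ X K i + Y i) = ∑ i, X i + ∑ i, Y i + (N - #K : ℂ) * δ := by
    have h1 : ∀ i, shiftOff δ X K i = X i + (δ - if i ∈ K then δ else 0) := by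
      intro i; by_cases hi : i ∈ K <;> simp [shiftOff, hi]
    simp only [h1, Finset.sum_add_distrib, Finset.sum_sub_distrib]
    simp
    ring
  have hc0 : f c ≠ 0 := by simpa using hc ∅
  rw [frobenius_det f hodd hRiem N c _ _ hP' hc, hsum, subsetTerm, ← Del_shiftOff f hodd δ X hX K,
    ← prod_shiftOff f δ X Y hXY' K]
  field_simp

/-- The duality in the multiplicity-free case. -/
lemma subset_duality (f : ℂ → ℂ) (hf : f ≠ 0) (hodd : ∀ t : ℂ, f (-t) = -f t)
    (hdiff : Differentiable ℂ f)
    (hRiem : ∀ x y u v : ℂ,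
      f (x + y) * f (x - y) * f (u + v) * f (u - v) =
        f (x + u) * f (x - u) * f (y + v) * f (y - v)
          - f (x + v) * f (x - v) * f (y + u) * f (y - u))
    (δ : ℂ) {N : ℕ} (X Y : Fin N → ℂ)
    (hX : ∀ i j, i ≠ j → f (X i - X j) ≠ 0) (hY : ∀ i j, i ≠ j → f (Y i - Y j) ≠ 0)
    (hXY : ∀ i j, f (X i + Y j) ≠ 0) (hXY' : ∀ i j, f (X i + Y j + δ) ≠ 0) (d : ℕ) :
    ∑ K ∈ Finset.univ.powersetCard d, subsetTerm f δ X Y K =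
      ∑ K ∈ Finset.univ.powersetCard d, subsetTerm f δ Y X K := by
  obtain ⟨c, hc⟩ : ∃ c : ℂ, ∀ p : (Finset (Fin N) × Finset (Fin N)) ⊕
      ((Finset (Fin N) × Finset (Fin N)) ⊕ Unit),
      f (p.elim (fun q => ∑ i ∈ q.2, (shiftOff δ X q.1 i + Y i))
        (Sum.elim (fun q => ∑ i ∈ q.2, (shiftOff δ Y q.1 i + X i))
          (fun _ => ∑ i, X i + ∑ i, Y i + (N - d : ℂ) * δ)) + 1 * c) ≠ 0 :=
    (dense_ne_zero f hf hdiff (fun _ => 1) _ (fun _ => one_ne_zero)).nonempty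
  have hc1 : ∀ K S : Finset (Fin N), f (c + ∑ i ∈ S, (shiftOff δ X K i + Y i)) ≠ 0 := by
    intro K S
    simpa [add_comm] using hc (Sum.inl (K, S))
  have hc2 : ∀ K S : Finset (Fin N), f (c + ∑ i ∈ S, (shiftOff δ Y K i + X i)) ≠ 0 := by
    intro K S
    simpa [add_comm] using hc (Sum.inr (Sum.inl (K, S)))
  have hc3 : f (c + (∑ i, X i + ∑ i, Y i + (N - d : ℂ) * δ)) ≠ 0 := by
    rw [add_comm]; simpa using hc (Sum.inr (Sum.inr ()))
  have hc0 : f c ≠ 0 := by simpa using hc1 ∅ ∅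
  set A : Matrix (Fin N) (Fin N) ℂ := Matrix.of fun i j =>
    f (c + X i + Y j) / (f c * f (X i + Y j)) with hA
  set B : Matrix (Fin N) (Fin N) ℂ := Matrix.of fun i j =>
    f (c + (X i + δ) + Y j) / (f c * f (X i + δ + Y j)) with hB
  have h := sum_det_rows_eq_columns A B d
  have hrow : ∀ K : Finset (Fin N), Matrix.of (K.piecewise (fun i => A i) (fun i => B i)) =
      Matrix.of fun i j => f (c + shiftOff δ X K i + Y j) / (f c * f (shiftOff δ X K i + Y j)) := by
    intro K
    ext i j
    by_cases hi : i ∈ K <;> simp [hi, shiftOff, hA, hB]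
  have hcol : ∀ K : Finset (Fin N),
      Matrix.of (K.piecewise (fun i => A.transpose i) (fun i => B.transpose i)) =
      Matrix.of fun i j => f (c + shiftOff δ Y K i + X j) / (f c * f (shiftOff δ Y K i + X j)) := by
    intro K
    ext i j
    by_cases hi : i ∈ K
    · simp [hi, shiftOff, hA, add_comm, add_left_comm]
    · simp [hi, shiftOff, hB, add_comm, add_left_comm]
  simp only [hrow, hcol] at h
  set C : ℂ := f (c + (∑ i, X i + ∑ i, Y i + (N - d : ℂ) * δ)) / f c
        * (Del f X * Del f Y / ∏ i, ∏ j, f (X i + Y j + δ)) with hC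
  have hC0 : C ≠ 0 := by
    refine mul_ne_zero (div_ne_zero hc3 hc0) (div_ne_zero (mul_ne_zero (Del_ne_zero f X hX)
      (Del_ne_zero f Y hY)) ?_)
    exact Finset.prod_ne_zero_iff.mpr fun i _ => Finset.prod_ne_zero_iff.mpr fun j _ => hXY' i j
  refine mul_left_cancel₀ hC0 ?_
  rw [Finset.mul_sum, Finset.mul_sum]
  convert h using 1
  · refine Finset.sum_congr rfl fun K hK => ?_
    rw [det_shiftOff f hodd hRiem δ X Y hX hXY hXY' c K (hc1 K), (Finset.mem_powersetCard.mp hK).2]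
  · refine Finset.sum_congr rfl fun K hK => ?_
    rw [det_shiftOff f hodd hRiem δ Y X hY (fun i j => by rw [add_comm]; exact hXY j i)
      (fun i j => by rw [add_comm (Y i)]; exact hXY' j i) c K (hc2 K),
      (Finset.mem_powersetCard.mp hK).2, hC, add_comm (∑ i, X i), mul_comm (Del f X),
      Finset.prod_comm]
    simp only [add_comm (X _)]

/-! ### Sums over multi-indices and shifted factorials -/

/-- The left-hand side of the duality; the right-hand side is the same expression with `(x, α)` and
`(y, β)` exchanged. -/
noncomputable def dualSum (f : ℂ → ℂ) (δ : ℂ) {m n : ℕ} (x : Fin m → ℂ) (y : Fin n → ℂ)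
    (α : Fin m → ℕ) (β : Fin n → ℕ) (d : ℕ) : ℂ :=
  ∑ μ ∈ Finset.Nat.antidiagonalTuple m d,
        (Del f (fun i => x i + (μ i : ℂ) * δ) / Del f x)
          * (∏ i, ∏ j, sf f δ (x i - x j - (α j : ℂ) * δ) (μ i) /
              sf f δ (x i - x j + δ) (μ i))
          * ∏ i, ∏ k, sf f δ (x i + y k + (β k : ℂ) * δ) (μ i) /
              sf f δ (x i + y k) (μ i)

lemma sf_add (f : ℂ → ℂ) (δ z : ℂ) (p q : ℕ) :
    sf f δ z (p + q) = sf f δ z p * sf f δ (z + p * δ) q := by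
  simp only [sf, Finset.prod_range_add]
  congr 1
  refine Finset.prod_congr rfl fun i _ => ?_
  congr 1; push_cast; ring

lemma sf_neg (f : ℂ → ℂ) (hodd : ∀ t : ℂ, f (-t) = -f t) (δ z : ℂ) (q : ℕ) :
    sf f δ (-z) q = (-1) ^ q * sf f δ (z + δ - q * δ) q := by
  simp only [sf]
  rw [← Finset.prod_range_reflect]
  have : ((-1 : ℂ)) ^ q = ∏ _i ∈ Finset.range q, (-1 : ℂ) := by simp
  rw [this, ← Finset.prod_mul_distrib]
  refine Finset.prod_congr rfl fun i hi => ?_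
  have hi' : i + 1 ≤ q := Finset.mem_range.mp hi
  have hcast : ((q - 1 - i : ℕ) : ℂ) = q - 1 - i := by
    rw [Nat.sub_sub, Nat.cast_sub (by omega)]; push_cast; ring
  rw [hcast, neg_one_mul, ← hodd]
  congr 1; ring

lemma sf_ne_zero (f : ℂ → ℂ) (δ z : ℂ) (p : ℕ) (h : ∀ l : ℕ, l < p → f (z + l * δ) ≠ 0) :
    sf f δ z p ≠ 0 :=
  Finset.prod_ne_zero_iff.mpr fun l hl => h l (Finset.mem_range.mp hl)

/-- The factors of the two orderings of a pair of variables combine to one factor of the quotient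
of difference products: both `[z - qδ]_q [z] [z + δ]_p` and
`[z - qδ]_p [z + (p - q)δ] [z + (p - q + 1)δ]_q` equal `[z - qδ]_{p + q + 1}`. -/
lemma sf_pair (f : ℂ → ℂ) (hodd : ∀ t : ℂ, f (-t) = -f t) (δ z : ℂ)
    (hz : ∀ s : ℤ, f (z + s * δ) ≠ 0) (p q : ℕ) :
    f (z + (p - q) * δ) / f z =
      sf f δ (z + δ) p / sf f δ (z - q * δ) p * (sf f δ (-z + δ) q / sf f δ (-z - p * δ) q) := by
  have e1 : sf f δ (-z + δ) q = (-1) ^ q * sf f δ (z - q * δ) q := by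
    rw [show -z + δ = -(z - δ) by ring, sf_neg f hodd]; congr 2; ring
  have e2 : sf f δ (-z - p * δ) q = (-1) ^ q * sf f δ (z + (p - q + 1) * δ) q := by
    rw [show -z - p * δ = -(z + p * δ) by ring, sf_neg f hodd]; congr 2; ring
  have one : ∀ w, sf f δ w 1 = f w := by intro w; simp [sf]
  have e3 : sf f δ (z - q * δ) q * f z * sf f δ (z + δ) p =
      sf f δ (z - q * δ) p * f (z + (p - q) * δ) * sf f δ (z + (p - q + 1) * δ) q := by
    have h1 : sf f δ (z - q * δ) (q + 1 + p) =
        sf f δ (z - q * δ) q * f z * sf f δ (z + δ) p := by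
      rw [sf_add, sf_add, one]
      congr 2
      · congr 1; ring
      · push_cast; ring
    have h2 : sf f δ (z - q * δ) (p + 1 + q) =
        sf f δ (z - q * δ) p * f (z + (p - q) * δ) * sf f δ (z + (p - q + 1) * δ) q := by
      rw [sf_add, sf_add, one]
      congr 2
      · congr 1; ring
      · push_cast; ring
    rw [← h1, ← h2]; congr 1; ring
  have hz0 : f z ≠ 0 := by simpa using hz 0
  have n1 : sf f δ (z - q * δ) p ≠ 0 := by
    refine sf_ne_zero _ _ _ _ fun l _ => ?_
    convert hz (l - q) using 2; push_cast; ring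
  have n2 : sf f δ (z + (p - q + 1) * δ) q ≠ 0 := by
    refine sf_ne_zero _ _ _ _ fun l _ => ?_
    convert hz (l + p - q + 1) using 2; push_cast; ring
  rw [e1, e2]
  generalize sf f δ (z - q * δ) q = A₁ at *
  generalize sf f δ (z + (p - q + 1) * δ) q = A₂ at *
  generalize f (z + (p - q) * δ) = A₃ at *
  generalize sf f δ (z - q * δ) p = A₄ at *
  field_simp
  linear_combination -e3

lemma Del_ratio (f : ℂ → ℂ) (hodd : ∀ t : ℂ, f (-t) = -f t) (δ : ℂ)
    (hδ : ∀ k : ℤ, k ≠ 0 → f ((k : ℂ) * δ) ≠ 0) {m : ℕ} (x : Fin m → ℂ)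
    (hx : ∀ i j, i ≠ j → ∀ s : ℤ, f (x i - x j + s * δ) ≠ 0) (μ : Fin m → ℕ) :
    Del f (fun i => x i + (μ i : ℂ) * δ) / Del f x = (-1) ^ (∑ i, μ i) *
      ∏ i, ∏ j, sf f δ (x i - x j + δ) (μ i) / sf f δ (x i - x j - (μ j : ℂ) * δ) (μ i) := by
  rw [prod_prod_eq_diag_mul]
  have hdiag : ∀ i, sf f δ (x i - x i + δ) (μ i) / sf f δ (x i - x i - (μ i : ℂ) * δ) (μ i)
      = (-1) ^ μ i := by
    intro i
    have h : sf f δ δ (μ i) ≠ 0 := by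
      refine sf_ne_zero _ _ _ _ fun l _ => ?_
      convert hδ (l + 1) (by omega) using 2; push_cast; ring
    rw [sub_self, zero_sub, zero_add, sf_neg f hodd, add_sub_cancel_left]
    have h1 : ((-1 : ℂ) ^ μ i) * (-1) ^ μ i = 1 := by rw [← mul_pow]; simp
    field_simp
    linear_combination -h1
  simp only [hdiag]
  rw [Finset.prod_pow_eq_pow_sum, ← mul_assoc, ← pow_add, Even.neg_one_pow ⟨_, rfl⟩, one_mul]
  simp only [Del, ← Finset.prod_div_distrib]
  refine Finset.prod_congr rfl fun i _ => Finset.prod_congr rfl fun j hj => ?_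
  have hij : i ≠ j := ne_of_lt (by simpa using hj)
  have h := sf_pair f hodd δ (x i - x j) (hx i j hij) (μ i) (μ j)
  rw [neg_sub] at h
  rw [← h]
  congr 2; ring

/-! ### Principal specialisation -/

lemma prod_telescope (h : ℕ → ℂ) (μ α : ℕ) (hle : μ ≤ α) (hh : ∀ b, μ ≤ b → h b ≠ 0) :
    ∏ b ∈ Finset.range α, (if b < μ then 1 else h (b + 1) / h b) = h α / h μ := by
  induction α, hle using Nat.le_induction with
  | base =>
    rw [div_self (hh μ le_rfl)]
    refine Finset.prod_eq_one fun b hb => ?_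
    rw [if_pos (Finset.mem_range.mp hb)]
  | succ α hle ih =>
    have := hh α hle
    rw [Finset.prod_range_succ, ih, if_neg (by omega)]
    field_simp

lemma prod_fin_ite_lt (F : ℕ → ℂ) (μ α : ℕ) (hle : μ ≤ α) :
    ∏ a : Fin α, (if (a : ℕ) < μ then F a else 1) = ∏ a ∈ Finset.range μ, F a := by
  rw [Fin.prod_univ_eq_prod_range (fun a => if a < μ then F a else 1), ← Finset.prod_filter]
  refine Finset.prod_congr ?_ fun _ _ => rfl
  ext a; simp; omega

/-- The variables `x i, x i + δ, …, x i + (α i - 1)δ` for all `i`, enumerated by `e`. -/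
noncomputable def blocks (δ : ℂ) {m N : ℕ} {α : Fin m → ℕ} (e : (Σ i, Fin (α i)) ≃ Fin N)
    (x : Fin m → ℂ) (p : Fin N) : ℂ :=
  x (e.symm p).1 + ((e.symm p).2 : ℕ) * δ

/-- The set consisting of the first `μ i` variables of the `i`-th block, for all `i`. -/
def initialSegs {m N : ℕ} {α : Fin m → ℕ} (e : (Σ i, Fin (α i)) ≃ Fin N) (μ : Fin m → ℕ) :
    Finset (Fin N) :=
  Finset.univ.filter fun p => ((e.symm p).2 : ℕ) < μ (e.symm p).1

lemma mem_initialSegs {m N : ℕ} {α : Fin m → ℕ} (e : (Σ i, Fin (α i)) ≃ Fin N) (μ : Fin m → ℕ)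
    (i : Fin m) (a : Fin (α i)) : e ⟨i, a⟩ ∈ initialSegs e μ ↔ (a : ℕ) < μ i := by
  simp only [initialSegs, Finset.mem_filter, Finset.mem_univ, true_and]
  rw [Equiv.symm_apply_apply]

lemma blocks_apply (δ : ℂ) {m N : ℕ} {α : Fin m → ℕ} (e : (Σ i, Fin (α i)) ≃ Fin N)
    (x : Fin m → ℂ) (i : Fin m) (a : Fin (α i)) : blocks δ e x (e ⟨i, a⟩) = x i + (a : ℕ) * δ := by
  rw [blocks, Equiv.symm_apply_apply]

lemma prod_blocks {m N : ℕ} {α : Fin m → ℕ} (e : (Σ i, Fin (α i)) ≃ Fin N) (F : Fin N → ℂ) :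
    ∏ p, F p = ∏ i, ∏ a : Fin (α i), F (e ⟨i, a⟩) := by
  rw [← e.prod_comp, Fintype.prod_sigma]

lemma subsetTerm_initialSegs (f : ℂ → ℂ) (δ : ℂ)
    (hδ : ∀ k : ℤ, k ≠ 0 → f ((k : ℂ) * δ) ≠ 0) {m n N : ℕ} (x : Fin m → ℂ) (y : Fin n → ℂ)
    (α : Fin m → ℕ) (β : Fin n → ℕ)
    (e : (Σ i, Fin (α i)) ≃ Fin N) (e' : (Σ k, Fin (β k)) ≃ Fin N)
    (hx : ∀ i j, i ≠ j → ∀ s : ℤ, f (x i - x j + s * δ) ≠ 0)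
    (hxy : ∀ i k, ∀ s : ℤ, f (x i + y k + s * δ) ≠ 0)
    (μ : Fin m → ℕ) (hμ : ∀ i, μ i ≤ α i) :
    subsetTerm f δ (blocks δ e x) (blocks δ e' y) (initialSegs e μ) =
      (∏ i, ∏ j, sf f δ (x i - x j - (α j : ℂ) * δ) (μ i) /
          sf f δ (x i - x j - (μ j : ℂ) * δ) (μ i))
        * ∏ i, ∏ k, sf f δ (x i + y k + (β k : ℂ) * δ) (μ i) / sf f δ (x i + y k) (μ i) := by
  rw [subsetTerm]
  congr 1
  · rw [prod_blocks e]
    refine Finset.prod_congr rfl fun i _ => ?_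
    have h1 : ∀ a : Fin (α i), (∏ q, if e ⟨i, a⟩ ∈ initialSegs e μ ∧ q ∉ initialSegs e μ then
        f (blocks δ e x (e ⟨i, a⟩) - blocks δ e x q - δ)
          / f (blocks δ e x (e ⟨i, a⟩) - blocks δ e x q) else 1)
        = if (a : ℕ) < μ i then ∏ j, f (x i - x j - (α j : ℂ) * δ + (a : ℕ) * δ) /
          f (x i - x j - (μ j : ℂ) * δ + (a : ℕ) * δ) else 1 := by
      intro a
      simp only [prod_blocks e, mem_initialSegs, blocks_apply]
      by_cases ha : (a : ℕ) < μ i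
      · simp only [ha, true_and, if_true]
        refine Finset.prod_congr rfl fun j _ => ?_
        have := prod_telescope (fun b => f (x i - x j - (b : ℂ) * δ + (a : ℕ) * δ)) (μ j) (α j)
          (hμ j) (fun b hb => by
            by_cases hij : i = j
            · subst hij
              convert hδ ((a : ℕ) - b) (by omega) using 2; push_cast; ring
            · convert hx i j hij ((a : ℕ) - b) using 2; push_cast; ring)
        rw [← this, ← Fin.prod_univ_eq_prod_range (fun b => if b < μ j then 1 else
          f (x i - x j - ((b + 1 : ℕ) : ℂ) * δ + (a : ℕ) * δ)
            / f (x i - x j - (b : ℂ) * δ + (a : ℕ) * δ))]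
        refine Finset.prod_congr rfl fun b _ => ?_
        rw [ite_not]
        congr 3 <;> push_cast <;> ring
      · simp [ha]
    rw [Finset.prod_congr rfl fun a _ => h1 a,
      prod_fin_ite_lt (fun a : ℕ => ∏ j, f (x i - x j - (α j : ℂ) * δ + (a : ℂ) * δ) /
        f (x i - x j - (μ j : ℂ) * δ + (a : ℂ) * δ)) _ _ (hμ i), Finset.prod_comm]
    simp only [sf, Finset.prod_div_distrib]
  · rw [prod_blocks e]
    refine Finset.prod_congr rfl fun i _ => ?_
    have h1 : ∀ a : Fin (α i), (∏ q, if e ⟨i, a⟩ ∈ initialSegs e μ then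
        f (blocks δ e x (e ⟨i, a⟩) + blocks δ e' y q + δ)
          / f (blocks δ e x (e ⟨i, a⟩) + blocks δ e' y q) else 1)
        = if (a : ℕ) < μ i then ∏ k, f (x i + y k + (β k : ℂ) * δ + (a : ℕ) * δ) /
          f (x i + y k + (a : ℕ) * δ) else 1 := by
      intro a
      simp only [prod_blocks e', mem_initialSegs, blocks_apply]
      by_cases ha : (a : ℕ) < μ i
      · simp only [ha, if_true]
        refine Finset.prod_congr rfl fun k _ => ?_
        have := prod_telescope (fun b => f (x i + y k + (b : ℂ) * δ + (a : ℕ) * δ)) 0 (β k)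
          (Nat.zero_le _) (fun b _ => by
            convert hxy i k (b + (a : ℕ)) using 2; push_cast; ring)
        simp only [not_lt_zero, if_false, Nat.cast_zero, zero_mul, add_zero] at this
        rw [← this, ← Fin.prod_univ_eq_prod_range (fun b =>
          f (x i + y k + ((b + 1 : ℕ) : ℂ) * δ + (a : ℕ) * δ)
            / f (x i + y k + (b : ℂ) * δ + (a : ℕ) * δ))]
        refine Finset.prod_congr rfl fun b _ => ?_
        congr 2 <;> push_cast <;> ring
      · simp [ha]
    rw [Finset.prod_congr rfl fun a _ => h1 a,
      prod_fin_ite_lt (fun a : ℕ => ∏ k, f (x i + y k + (β k : ℂ) * δ + (a : ℂ) * δ) /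
        f (x i + y k + (a : ℂ) * δ)) _ _ (hμ i), Finset.prod_comm]
    simp only [sf, Finset.prod_div_distrib]

lemma card_initialSegs {m N : ℕ} {α : Fin m → ℕ} (e : (Σ i, Fin (α i)) ≃ Fin N) (μ : Fin m → ℕ)
    (hμ : ∀ i, μ i ≤ α i) : #(initialSegs e μ) = ∑ i, μ i := by
  rw [← Finset.filter_univ_mem (initialSegs e μ), Finset.card_filter, ← e.sum_comp,
    Fintype.sum_sigma]
  refine Finset.sum_congr rfl fun i _ => ?_
  simp only [mem_initialSegs]
  rw [← Finset.card_filter, Fin.card_filter_val_lt]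
  exact min_eq_right (hμ i)

/-- A set of variables whose intersection with each block is closed under passing to the previous
variable consists of initial segments. -/
lemma exists_eq_initialSegs {m N : ℕ} {α : Fin m → ℕ} (e : (Σ i, Fin (α i)) ≃ Fin N)
    (K : Finset (Fin N))
    (hK : ∀ i (a b : Fin (α i)), (a : ℕ) + 1 = b → e ⟨i, b⟩ ∈ K → e ⟨i, a⟩ ∈ K) :
    ∃ μ : Fin m → ℕ, (∀ i, μ i ≤ α i) ∧ initialSegs e μ = K := by
  let S : ∀ i, Finset (Fin (α i)) := fun i => Finset.univ.filter fun a => e ⟨i, a⟩ ∈ K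
  have hlow : ∀ i (k : ℕ) (a b : Fin (α i)), (a : ℕ) + k = b → e ⟨i, b⟩ ∈ K → e ⟨i, a⟩ ∈ K := by
    intro i k
    induction k with
    | zero =>
      intro a b hab hb
      have : a = b := Fin.ext (by omega)
      rwa [this]
    | succ k ih =>
      intro a b hab hb
      have hlt' : (a : ℕ) + 1 < α i := by omega
      exact hK i a ⟨a + 1, hlt'⟩ rfl (ih ⟨a + 1, hlt'⟩ b (by simp; omega) hb)
  have hmem : ∀ i (a : Fin (α i)), (a : ℕ) < #(S i) ↔ e ⟨i, a⟩ ∈ K := by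
    intro i a
    constructor
    · intro h
      by_contra hn
      have hsub : S i ⊆ Finset.Iio a := by
        intro b hb
        rw [Finset.mem_Iio]
        by_contra hba
        have hba' : (a : ℕ) ≤ b := not_lt.mp hba
        exact hn (hlow i (b - a) a b (by omega) (by simpa [S] using hb))
      have := Finset.card_le_card hsub
      rw [Fin.card_Iio] at this
      omega
    · intro h
      have hsub : Finset.Iic a ⊆ S i := by
        intro b hb
        have hba' : (b : ℕ) ≤ a := Fin.le_def.mp (Finset.mem_Iic.mp hb)
        simpa [S] using hlow i (a - b) b a (by omega) h
      have := Finset.card_le_card hsub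
      rw [Fin.card_Iic] at this
      omega
  refine ⟨fun i => #(S i), fun i => by simpa using Finset.card_le_univ (S i), ?_⟩
  ext p
  obtain ⟨⟨i, a⟩, rfl⟩ := e.surjective p
  rw [mem_initialSegs, hmem]

/-- Principal specialisation: for the block variables only the sets of initial segments contribute,
and they reproduce the sum over multi-indices up to the sign `(-1) ^ d`. -/
lemma dualSum_eq (f : ℂ → ℂ) (hodd : ∀ t : ℂ, f (-t) = -f t) (δ : ℂ)
    (hδ : ∀ k : ℤ, k ≠ 0 → f ((k : ℂ) * δ) ≠ 0) {m n N : ℕ} (x : Fin m → ℂ) (y : Fin n → ℂ)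
    (α : Fin m → ℕ) (β : Fin n → ℕ)
    (e : (Σ i, Fin (α i)) ≃ Fin N) (e' : (Σ k, Fin (β k)) ≃ Fin N)
    (hx : ∀ i j, i ≠ j → ∀ s : ℤ, f (x i - x j + s * δ) ≠ 0)
    (hxy : ∀ i k, ∀ s : ℤ, f (x i + y k + s * δ) ≠ 0) (d : ℕ) :
    dualSum f δ x y α β d = (-1) ^ d *
      ∑ K ∈ Finset.univ.powersetCard d, subsetTerm f δ (blocks δ e x) (blocks δ e' y) K := by
  have f0 : f 0 = 0 := by
    have := hodd 0
    rw [neg_zero] at this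
    linear_combination this / 2
  rw [dualSum, Finset.mul_sum]
  rw [← Finset.sum_filter_of_ne (p := fun μ : Fin m → ℕ => ∀ i, μ i ≤ α i)]
  · refine Finset.sum_of_injOn (initialSegs e) ?_ ?_ ?_ ?_
    · intro μ hμ ν hν h
      have hμ' : ∀ i, μ i ≤ α i := by simpa using (Finset.mem_filter.mp hμ).2
      have hν' : ∀ i, ν i ≤ α i := by simpa using (Finset.mem_filter.mp hν).2
      have key : ∀ i (a : Fin (α i)), (a : ℕ) < μ i ↔ (a : ℕ) < ν i := by
        intro i a
        rw [← mem_initialSegs e, ← mem_initialSegs e, h]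
      funext i
      rcases lt_trichotomy (μ i) (ν i) with hlt | heq | hgt
      · have := key i ⟨μ i, lt_of_lt_of_le hlt (hν' i)⟩
        simp at this; omega
      · exact heq
      · have := key i ⟨ν i, lt_of_lt_of_le hgt (hμ' i)⟩
        simp at this; omega
    · intro μ hμ
      have hμ' := Finset.mem_filter.mp hμ
      have hs := Finset.Nat.mem_antidiagonalTuple.mp hμ'.1
      simp [Finset.mem_powersetCard, card_initialSegs e μ hμ'.2, hs]
    · intro K hK hKim
      refine mul_eq_zero_of_right _ ?_
      by_contra hne
      refine hKim ?_
      obtain ⟨μ, hμ, rfl⟩ := exists_eq_initialSegs e K (by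
        intro i a b hab hb
        by_contra ha
        -- consecutive variables of a block differ by `δ`, so this pair contributes `[δ - δ] = 0`
        refine hne (mul_eq_zero_of_left ?_ _)
        refine Finset.prod_eq_zero (Finset.mem_univ (e ⟨i, b⟩)) ?_
        refine Finset.prod_eq_zero (Finset.mem_univ (e ⟨i, a⟩)) ?_
        rw [if_pos ⟨hb, ha⟩]
        simp only [blocks_apply, ← hab]
        push_cast
        rw [show x i + ((a : ℕ) + 1) * δ - (x i + (a : ℕ) * δ) - δ = 0 by ring, f0, zero_div])
      refine ⟨μ, ?_, rfl⟩
      rw [Finset.mem_powersetCard, card_initialSegs e μ hμ] at hK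
      simp [Finset.Nat.mem_antidiagonalTuple, hK.2, hμ]
    · intro μ hμ
      have hμ' := Finset.mem_filter.mp hμ
      have hs := Finset.Nat.mem_antidiagonalTuple.mp hμ'.1
      rw [subsetTerm_initialSegs f δ hδ x y α β e e' hx hxy μ hμ'.2,
        Del_ratio f hodd δ hδ x hx, hs, ← mul_assoc]
      congr 1
      rw [mul_assoc]
      congr 1
      simp only [← Finset.prod_mul_distrib]
      refine Finset.prod_congr rfl fun i _ => Finset.prod_congr rfl fun j _ => ?_
      have hn : sf f δ (x i - x j + δ) (μ i) ≠ 0 := by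
        refine sf_ne_zero _ _ _ _ fun l _ => ?_
        by_cases hij : i = j
        · subst hij
          convert hδ (l + 1) (by omega) using 2; push_cast; ring
        · convert hx i j hij (l + 1) using 2; push_cast; ring
      field_simp
  · intro μ _ hne
    by_contra! hlt
    obtain ⟨i, hi⟩ := hlt
    -- the diagonal numerator `[-α i δ]_{μ i}` contains the factor `[0]`
    refine hne (mul_eq_zero_of_left (mul_eq_zero_of_right _ ?_) _)
    refine Finset.prod_eq_zero (Finset.mem_univ i) (Finset.prod_eq_zero (Finset.mem_univ i) ?_)
    rw [div_eq_zero_iff]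
    left
    refine Finset.prod_eq_zero (Finset.mem_range.mpr hi) ?_
    rw [show x i - x i - (α i : ℂ) * δ + α i * δ = 0 by ring, f0]

/-- The theorem for points at which no bracket vanishes, whatever the integer multiple of `δ`. -/
lemma duality_of_generic (f : ℂ → ℂ) (hf : f ≠ 0) (hodd : ∀ t : ℂ, f (-t) = -f t)
    (hdiff : Differentiable ℂ f)
    (hRiem : ∀ x y u v : ℂ,
      f (x + y) * f (x - y) * f (u + v) * f (u - v) =
        f (x + u) * f (x - u) * f (y + v) * f (y - v)
          - f (x + v) * f (x - v) * f (y + u) * f (y - u))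
    (δ : ℂ) (hδ : ∀ k : ℤ, k ≠ 0 → f ((k : ℂ) * δ) ≠ 0) {m n : ℕ}
    (x : Fin m → ℂ) (y : Fin n → ℂ) (α : Fin m → ℕ) (β : Fin n → ℕ)
    (hbal : (∑ i, α i) = ∑ k, β k)
    (hx : ∀ i j, i ≠ j → ∀ s : ℤ, f (x i - x j + s * δ) ≠ 0)
    (hy : ∀ i j, i ≠ j → ∀ s : ℤ, f (y i - y j + s * δ) ≠ 0)
    (hxy : ∀ i k, ∀ s : ℤ, f (x i + y k + s * δ) ≠ 0) (d : ℕ) :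
    dualSum f δ x y α β d = dualSum f δ y x β α d := by
  have e : (Σ i, Fin (α i)) ≃ Fin (∑ i, α i) := finSigmaFinEquiv
  have e' : (Σ i, Fin (β i)) ≃ Fin (∑ i, α i) := finSigmaFinEquiv.trans (finCongr hbal.symm)
  have hblock : ∀ {l : ℕ} (z : Fin l → ℂ) (γ : Fin l → ℕ) (g : (Σ i, Fin (γ i)) ≃ Fin (∑ i, α i)),
      (∀ i j, i ≠ j → ∀ s : ℤ, f (z i - z j + s * δ) ≠ 0) →
      ∀ p q, p ≠ q → f (blocks δ g z p - blocks δ g z q) ≠ 0 := by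
    intro l z γ g hz p q hpq
    obtain ⟨⟨i, a⟩, rfl⟩ := g.surjective p
    obtain ⟨⟨j, b⟩, rfl⟩ := g.surjective q
    simp only [blocks_apply]
    by_cases hij : i = j
    · subst hij
      have hab : (a : ℕ) ≠ b := fun h => hpq (by rw [Fin.ext h])
      convert hδ ((a : ℕ) - (b : ℕ)) (by omega) using 2; push_cast; ring
    · convert hz i j hij ((a : ℕ) - (b : ℕ)) using 2; push_cast; ring
  rw [dualSum_eq f hodd δ hδ x y α β e e' hx hxy,
    dualSum_eq f hodd δ hδ y x β α e' e hy (fun k i s => by rw [add_comm (y k)]; exact hxy i k s),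
    subset_duality f hf hodd hdiff hRiem δ _ _ (hblock x α e hx) (hblock y β e' hy)]
  · intro p q
    simp only [blocks]
    convert hxy (e.symm p).1 (e'.symm q).1
      (((e.symm p).2 : ℕ) + ((e'.symm q).2 : ℕ)) using 2
    push_cast; ring
  · intro p q
    simp only [blocks]
    convert hxy (e.symm p).1 (e'.symm q).1
      (((e.symm p).2 : ℕ) + ((e'.symm q).2 : ℕ) + 1) using 2
    push_cast; ring

/-! ### Removing the genericity assumptions -/

lemma continuous_sf (f : ℂ → ℂ) (hdiff : Differentiable ℂ f) (δ : ℂ) (p : ℕ) (g : ℂ → ℂ)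
    (hg : Continuous g) : Continuous fun t => sf f δ (g t) p := by
  have := hdiff.continuous
  unfold sf
  fun_prop

lemma continuous_Del (f : ℂ → ℂ) (hdiff : Differentiable ℂ f) {m : ℕ} (g : ℂ → Fin m → ℂ)
    (hg : ∀ i, Continuous fun t => g t i) : Continuous fun t => Del f (g t) := by
  have := hdiff.continuous
  unfold Del
  fun_prop

lemma continuousAt_dualSum (f : ℂ → ℂ) (hdiff : Differentiable ℂ f) (δ : ℂ) {m n : ℕ}
    (x : ℂ → Fin m → ℂ) (y : ℂ → Fin n → ℂ) (α : Fin m → ℕ) (β : Fin n → ℕ) (d : ℕ)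
    (hcx : ∀ i, Continuous fun t => x t i) (hcy : ∀ i, Continuous fun t => y t i) (t₀ : ℂ)
    (hx : ∀ i j, i ≠ j → f (x t₀ i - x t₀ j) ≠ 0)
    (hxd : ∀ (i j : Fin m) (l : ℕ), l < d → f (x t₀ i - x t₀ j + δ + (l : ℂ) * δ) ≠ 0)
    (hxy : ∀ (i : Fin m) (k : Fin n) (l : ℕ), l < d → f (x t₀ i + y t₀ k + (l : ℂ) * δ) ≠ 0) :
    ContinuousAt (fun t => dualSum f δ (x t) (y t) α β d) t₀ := by
  unfold dualSum
  refine tendsto_finsetSum _ fun μ hμ => ?_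
  have hle : ∀ i, μ i ≤ d := by
    intro i
    rw [← Finset.Nat.mem_antidiagonalTuple.mp hμ]
    exact Finset.single_le_sum (f := μ) (fun _ _ => Nat.zero_le _) (Finset.mem_univ i)
  refine ContinuousAt.mul (ContinuousAt.mul ?_ ?_) ?_
  · refine ContinuousAt.div (continuous_Del f hdiff _ fun i => ?_).continuousAt
      (continuous_Del f hdiff _ hcx).continuousAt (Del_ne_zero f _ hx)
    have := hcx i
    fun_prop
  · refine tendsto_finsetProd _ fun i _ => tendsto_finsetProd _ fun j _ => ?_
    have := hcx i
    have := hcx j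
    refine ContinuousAt.div (continuous_sf f hdiff δ _ _ (by fun_prop)).continuousAt
      (continuous_sf f hdiff δ _ _ (by fun_prop)).continuousAt
      (sf_ne_zero _ _ _ _ fun l hl => hxd i j l (lt_of_lt_of_le hl (hle i)))
  · refine tendsto_finsetProd _ fun i _ => tendsto_finsetProd _ fun k _ => ?_
    have := hcx i
    have := hcy k
    refine ContinuousAt.div (continuous_sf f hdiff δ _ _ (by fun_prop)).continuousAt
      (continuous_sf f hdiff δ _ _ (by fun_prop)).continuousAt
      (sf_ne_zero _ _ _ _ fun l hl => hxy i k l (lt_of_lt_of_le hl (hle i)))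

/-- Theorem 2.1 (specialized identity): for multi-indices `α`, `β` with `|α| = |β|`,
the two multiple sums over `μ` with `|μ| = d` (resp. `ν`) agree. -/
theorem multi_index_duality
    (f : ℂ → ℂ) (hf : f ≠ 0) (hodd : ∀ t : ℂ, f (-t) = -f t) (hdiff : Differentiable ℂ f)
    (hRiem : ∀ x y u v : ℂ,
      f (x + y) * f (x - y) * f (u + v) * f (u - v) =
        f (x + u) * f (x - u) * f (y + v) * f (y - v)
          - f (x + v) * f (x - v) * f (y + u) * f (y - u))
    (δ : ℂ) (hδ : ∀ k : ℤ, k ≠ 0 → f ((k : ℂ) * δ) ≠ 0)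
    (m n : ℕ) (x : Fin m → ℂ) (y : Fin n → ℂ) (α : Fin m → ℕ) (β : Fin n → ℕ)
    (hbal : (∑ i, α i) = ∑ k, β k) (d : ℕ)
    (hx : ∀ i j, i ≠ j → f (x i - x j) ≠ 0)
    (hy : ∀ k l, k ≠ l → f (y k - y l) ≠ 0)
    (hxd : ∀ (i j : Fin m) (l : ℕ), l < d → f (x i - x j + δ + (l : ℂ) * δ) ≠ 0)
    (hyd : ∀ (k k' : Fin n) (l : ℕ), l < d → f (y k - y k' + δ + (l : ℂ) * δ) ≠ 0)
    (hxy : ∀ (i : Fin m) (k : Fin n) (l : ℕ), l < d → f (x i + y k + (l : ℂ) * δ) ≠ 0) :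
    (∑ μ ∈ Finset.Nat.antidiagonalTuple m d,
        (Del f (fun i => x i + (μ i : ℂ) * δ) / Del f x)
          * (∏ i, ∏ j, sf f δ (x i - x j - (α j : ℂ) * δ) (μ i) /
              sf f δ (x i - x j + δ) (μ i))
          * ∏ i, ∏ k, sf f δ (x i + y k + (β k : ℂ) * δ) (μ i) /
              sf f δ (x i + y k) (μ i)) =
      ∑ ν ∈ Finset.Nat.antidiagonalTuple n d,
        (Del f (fun k => y k + (ν k : ℂ) * δ) / Del f y)
          * (∏ k, ∏ l, sf f δ (y k - y l - (β l : ℂ) * δ) (ν k) /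
              sf f δ (y k - y l + δ) (ν k))
          * ∏ k, ∏ i, sf f δ (y k + x i + (α i : ℂ) * δ) (ν k) /
              sf f δ (y k + x i) (ν k) := by
  set X : ℂ → Fin m → ℂ := fun t i => x i + ((i : ℕ) + 1 : ℂ) * t with hX
  set Y : ℂ → Fin n → ℂ := fun t k => y k + ((k : ℕ) + 1 : ℂ) * t with hY
  have hX0 : X 0 = x := by ext; simp [hX]
  have hY0 : Y 0 = y := by ext; simp [hY]
  have hne : ∀ {l : ℕ} (i j : Fin l), i ≠ j → ((i : ℕ) : ℂ) - ((j : ℕ) : ℂ) ≠ 0 := by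
    intro l i j hij
    rw [sub_ne_zero]
    exact fun h => hij (Fin.ext (by exact_mod_cast h))
  have hcX : ∀ i, Continuous fun t => X t i := fun i => by simp only [hX]; fun_prop
  have hcY : ∀ i, Continuous fun t => Y t i := fun i => by simp only [hY]; fun_prop
  -- the directions in which `x` and `y` are moved make each relevant bracket nonconstant in `t`
  have hD := dense_ne_zero f hf hdiff
    (ι := ({p : Fin m × Fin m // p.1 ≠ p.2} × ℤ) ⊕
      (({p : Fin n × Fin n // p.1 ≠ p.2} × ℤ) ⊕ ((Fin m × Fin n) × ℤ)))
    (Sum.elim (fun q => ((q.1.1.1 : ℕ) : ℂ) - ((q.1.1.2 : ℕ) : ℂ))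
      (Sum.elim (fun q => ((q.1.1.1 : ℕ) : ℂ) - ((q.1.1.2 : ℕ) : ℂ))
        (fun q => (((q.1.1 : ℕ) + (q.1.2 : ℕ) + 2 : ℕ) : ℂ))))
    (Sum.elim (fun q => x q.1.1.1 - x q.1.1.2 + q.2 * δ)
      (Sum.elim (fun q => y q.1.1.1 - y q.1.1.2 + q.2 * δ)
        (fun q => x q.1.1 + y q.1.2 + q.2 * δ)))
    (by
      rintro (q | q | q)
      · exact hne _ _ q.1.2
      · exact hne _ _ q.1.2
      · exact Nat.cast_ne_zero.mpr (by omega))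
  set D := {t : ℂ | ∀ i, f _ ≠ 0} with hDdef
  have hgen : ∀ t ∈ D, dualSum f δ (X t) (Y t) α β d = dualSum f δ (Y t) (X t) β α d := by
    intro t ht
    refine duality_of_generic f hf hodd hdiff hRiem δ hδ (X t) (Y t) α β hbal ?_ ?_ ?_ d
    · intro i j hij s
      convert ht (Sum.inl (⟨(i, j), hij⟩, s)) using 2
      simp only [hX, Sum.elim_inl]; ring
    · intro i j hij s
      convert ht (Sum.inr (Sum.inl (⟨(i, j), hij⟩, s))) using 2
      simp only [hY, Sum.elim_inl, Sum.elim_inr]; ring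
    · intro i k s
      convert ht (Sum.inr (Sum.inr ((i, k), s))) using 2
      simp only [hX, hY, Sum.elim_inr]; push_cast; ring
  have hL := continuousAt_dualSum f hdiff δ X Y α β d hcX hcY 0 (by rwa [hX0]) (by rwa [hX0])
    (by rwa [hX0, hY0])
  have hR := continuousAt_dualSum f hdiff δ Y X β α d hcY hcX 0 (by rwa [hY0]) (by rwa [hY0])
    (by rw [hX0, hY0]; intro k i l hl; rw [add_comm (y k)]; exact hxy i k l hl)
  have hNe : (nhdsWithin (0 : ℂ) D).NeBot := mem_closure_iff_nhdsWithin_neBot.mp (hD 0)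
  have hfin : dualSum f δ (X 0) (Y 0) α β d = dualSum f δ (Y 0) (X 0) β α d := by
    refine tendsto_nhds_unique (hL.mono_left (nhdsWithin_le_nhds (s := D))) ?_
    refine (hR.mono_left (nhdsWithin_le_nhds (s := D))).congr' ?_
    filter_upwards [self_mem_nhdsWithin] with t ht using (hgen t ht).symm
  rw [hX0, hY0] at hfin
  exact hfin
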